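/- arXiv:2411.15877 — 2 statements merged into one kernel-verified Lean document; each statement's English description precedes it below -/
import Mathlib

section
/- Let 0 < u̲ ≤ ū and ε > 0. Let g_1,…,g_K ∈ ℝ^d be arbitrary vectors and define u_0 ∈ ℝ^d by u_{0,j} = 1/ū² for all j, and recursively u_k = β_k u_{k-1} + (1−β_k) g_k², where g_k² denotes the componentwise square, and where β_k = 1 if there exists j ∈ {1,…,d} with g_{k,j}² ≤ u_{k-1,j}, and otherwise β_k is any real number in the interval [max{ max_{j=1,…,d} (g_{k,j}² − 1/u̲²)/(g_{k,j}² − u_{k-1,j}), max_{j=1,…,d} (g_{k,j}² − (1+ε)² u_{k-1,j})/(g_{k,j}² − u_{k-1,j}), 0 }, 1]. Then for every k = 0,…,K and every j = 1,…,d one has 1/ū² ≤ u_{k,j} ≤ 1/u̲², i.e. u̲ ≤ 1/√u_{k,j} ≤ ū. -/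
open scoped BigOperators

/-
When `g²` exceeds `u` in every coordinate and `β ≤ 1`, no coordinate of `u` decreases, and the `j`-th
ratio `(g_j² - 1 / u̲²) / (g_j² - u_j)` is the smallest `β` that keeps `u_j` at most `1 / u̲²`.
Otherwise `β = 1` freezes `u`. Hence `u` never falls below its initial value and never
crosses the upper bound.
-/

theorem le_weightedAverage_iff {𝕜 : Type*} [CommRing 𝕜] [LinearOrder 𝕜] [IsStrictOrderedRing 𝕜]
    {u v β : 𝕜} (huv : u < v) : u ≤ β * u + (1 - β) * v ↔ β ≤ 1 := by
  have factored : β * u + (1 - β) * v - u = (1 - β) * (v - u) := by ring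
  rw [← sub_nonneg, factored, mul_nonneg_iff_of_pos_right (sub_pos.mpr huv), sub_nonneg]

theorem weightedAverage_le_iff {𝕜 : Type*} [Field 𝕜] [LinearOrder 𝕜] [IsStrictOrderedRing 𝕜]
    {u v b β : 𝕜} (huv : u < v) :
    β * u + (1 - β) * v ≤ b ↔ (v - b) / (v - u) ≤ β := by
  have rearranged : β * u + (1 - β) * v = v - β * (v - u) := by ring
  rw [div_le_iff₀ (sub_pos.mpr huv), rearranged, sub_le_comm]

theorem stmt_2_general {ι 𝕜 : Type*} [Field 𝕜] [LinearOrder 𝕜] [IsStrictOrderedRing 𝕜] {K : ℕ}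
    {a b : 𝕜} {v u : ℕ → ι → 𝕜} {β : ℕ → 𝕜}
    (hu0 : ∀ j, u 0 j ∈ Set.Icc a b)
    (hu : ∀ k < K, ∀ j, u (k + 1) j = β k * u k j + (1 - β k) * v k j)
    (hβ1 : ∀ k < K, (∃ j, v k j ≤ u k j) → β k = 1)
    (hβ2 : ∀ k < K, (∀ j, u k j < v k j) →
      ∀ j, β k ∈ Set.Icc ((v k j - b) / (v k j - u k j)) 1) :
    ∀ k ≤ K, ∀ j, u k j ∈ Set.Icc a b := by
  intro k
  induction k with
  | zero => exact fun _ => hu0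
  | succ k ih =>
    intro hk j
    have hj : u k j ∈ Set.Icc a b := ih (Nat.le_of_succ_le hk) j
    rw [hu k hk]
    by_cases hfreeze : ∃ i, v k i ≤ u k i
    · simpa only [hβ1 k hk hfreeze, one_mul, sub_self, zero_mul, add_zero] using hj
    · have hlt : ∀ i, u k i < v k i := by simpa only [not_exists, not_le] using hfreeze
      obtain ⟨hratio, hone⟩ := hβ2 k hk hlt j
      exact ⟨hj.1.trans ((le_weightedAverage_iff (hlt j)).mpr hone),
        (weightedAverage_le_iff (hlt j)).mpr hratio⟩

/-- first part of Proposition 3.1 of the paper. Given bounds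
`0 < u̲ ≤ ū` and adjusted level `ε > 0`, the moving-average sequence `u_k` of
SGA-RMSProp, generated by the β-Selection rule, satisfies
`1/ū² ≤ u_{k,j} ≤ 1/u̲²` for every `k = 0, …, K` and every `j`. -/
theorem stmt_2 {d K : ℕ} (lb ub ε : ℝ) (hlb : 0 < lb) (hlbub : lb ≤ ub) (hε : 0 < ε)
    (g u : ℕ → Fin d → ℝ) (β : ℕ → ℝ)
    (hu0 : ∀ j, u 0 j = 1 / ub ^ 2)
    (hu : ∀ k, 1 ≤ k → k ≤ K → ∀ j,
      u k j = β k * u (k - 1) j + (1 - β k) * (g k j) ^ 2)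
    (hβ1 : ∀ k, 1 ≤ k → k ≤ K →
      (∃ j, (g k j) ^ 2 ≤ u (k - 1) j) → β k = 1)
    (hβ2 : ∀ k, 1 ≤ k → k ≤ K →
      (¬ ∃ j, (g k j) ^ 2 ≤ u (k - 1) j) →
        β k ∈ Set.Icc
          (max (max
              (⨆ j, ((g k j) ^ 2 - 1 / lb ^ 2) / ((g k j) ^ 2 - u (k - 1) j))
              (⨆ j, ((g k j) ^ 2 - (1 + ε) ^ 2 * u (k - 1) j) / ((g k j) ^ 2 - u (k - 1) j)))
            0) 1) :
    ∀ k, k ≤ K → ∀ j, 1 / ub ^ 2 ≤ u k j ∧ u k j ≤ 1 / lb ^ 2 := by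
  refine stmt_2_general (v := fun k j => g (k + 1) j ^ 2) (β := fun k => β (k + 1))
    (fun j => by rw [hu0]; exact ⟨le_rfl, by gcongr⟩) (fun k => hu (k + 1) k.succ_pos)
    (fun k => hβ1 (k + 1) k.succ_pos) (fun k hk hlt j => ?_)
  obtain ⟨hmax, hone⟩ := hβ2 (k + 1) k.succ_pos hk fun ⟨i, hi⟩ => (hlt i).not_ge hi
  exact ⟨(Finite.le_ciSup _ j).trans (max_le_iff.mp (max_le_iff.mp hmax).1).1, hone⟩
end

section
/- Let 0 < u̲ ≤ ū and ε > 0. Let g_1,…,g_K ∈ ℝ^d be arbitrary vectors and define u_0 ∈ ℝ^d by u_{0,j} = 1/ū² for all j, and recursively u_k = β_k u_{k-1} + (1−β_k) g_k² (componentwise square), where β_k = 1 if there exists j ∈ {1,…,d} with g_{k,j}² ≤ u_{k-1,j}, and otherwise β_k is any real number in [max{ max_{j=1,…,d} (g_{k,j}² − 1/u̲²)/(g_{k,j}² − u_{k-1,j}), max_{j=1,…,d} (g_{k,j}² − (1+ε)² u_{k-1,j})/(g_{k,j}² − u_{k-1,j}), 0 }, 1]. Define the diagonal matrices D_k = diag(1/√u_{k,1},…,1/√u_{k,d}).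 Then for every k = 1,…,K: ‖D_k^{1/2} D_{k-1}^{-1/2}‖₂ ≤ 1 and ‖D_k^{-1} D_{k-1} − I‖₂ ≤ ε; equivalently, u_{k-1,j} ≤ u_{k,j} ≤ (1+ε)² u_{k-1,j} for every j = 1,…,d. -/
open Matrix
open scoped BigOperators

noncomputable def specNorm {m n : ℕ} (M : Matrix (Fin m) (Fin n) ℝ) : ℝ :=
  ‖LinearMap.toContinuousLinearMap (Matrix.toEuclideanLin M)‖

/-!
Where no coordinate of the new data `a` is at most the state `x`, the next state is the point
`β x + (1 - β) a` between `x` and `a`, and it stays below a ceiling `b` exactly when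
`β ≥ (a - b) / (a - x)`. The β-Selection rule imposes this in all coordinates at once, and freezes
the state (`β = 1`) otherwise, so the state increases and stays below the ceiling in either case.
For the ceiling `(1 + ε)² x`, the ratio of the square roots of consecutive states lies in
`[1, 1 + ε]`, and the spectral norm of a diagonal matrix is its largest absolute entry.
-/

theorem mul_add_one_sub_mul_le_iff {𝕜 : Type*} [Field 𝕜] [LinearOrder 𝕜] [IsStrictOrderedRing 𝕜]
    {x a b β : 𝕜} (hxa : x < a) :
    β * x + (1 - β) * a ≤ b ↔ (a - b) / (a - x) ≤ β := by
  rw [div_le_iff₀ (sub_pos.2 hxa)]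
  constructor <;> intro h <;> linarith

theorem le_mul_add_one_sub_mul {R : Type*} [Ring R] [PartialOrder R] [IsOrderedRing R]
    {x a β : R} (hxa : x ≤ a) (hβ : β ≤ 1) : x ≤ β * x + (1 - β) * a :=
  calc
    x = β * x + (1 - β) * x := by noncomm_ring
    _ ≤ β * x + (1 - β) * a := by gcongr

/-- The β-Selection rule for the update `x ↦ β x + (1 - β) a` of the state `x` by the data `a`,
under a prescribed ceiling `b` on the new state. A rule with several ceilings is the conjunction
of the rules for each of them; the lower bound `0` on `β` is not part of the notion. -/
structure IsBetaSelection {ι : Type*} (x a b : ι → ℝ) (β : ℝ) : Prop where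
  eq_one : (∃ j, a j ≤ x j) → β = 1
  mem_Icc : (¬∃ j, a j ≤ x j) → β ∈ Set.Icc (⨆ j, (a j - b j) / (a j - x j)) 1

namespace IsBetaSelection

variable {ι : Type*} {x a b : ι → ℝ} {β : ℝ}

theorem le_update (h : IsBetaSelection x a b β) (j : ι) : x j ≤ β * x j + (1 - β) * a j := by
  by_cases hex : ∃ i, a i ≤ x i
  · simp [h.eq_one hex]
  · have hxa : x j < a j := not_le.1 fun hj => hex ⟨j, hj⟩
    exact le_mul_add_one_sub_mul hxa.le (h.mem_Icc hex).2

theorem update_le [Finite ι] (h : IsBetaSelection x a b β) {j : ι} (hxb : x j ≤ b j) :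
    β * x j + (1 - β) * a j ≤ b j := by
  by_cases hex : ∃ i, a i ≤ x i
  · simpa [h.eq_one hex] using hxb
  · have hxa : x j < a j := not_le.1 fun hj => hex ⟨j, hj⟩
    have hratio : (a j - b j) / (a j - x j) ≤ ⨆ i, (a i - b i) / (a i - x i) :=
      le_ciSup (f := fun i => (a i - b i) / (a i - x i)) (Set.finite_range _).bddAbove j
    exact (mul_add_one_sub_mul_le_iff hxa).2 (hratio.trans (h.mem_Icc hex).1)

end IsBetaSelection

open scoped Matrix.Norms.L2Operator in
theorem specNorm_diagonal {n : ℕ} (v : Fin n → ℝ) : specNorm (diagonal v) = ‖v‖ :=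
  l2_opNorm_diagonal v

theorem specNorm_diagonal_le_iff {n : ℕ} {v : Fin n → ℝ} {c : ℝ} (hc : 0 ≤ c) :
    specNorm (diagonal v) ≤ c ↔ ∀ j, |v j| ≤ c := by
  simp only [specNorm_diagonal, pi_norm_le_iff_of_nonneg hc, Real.norm_eq_abs]

theorem sqrt_one_div_sqrt_mul_sqrt_sqrt_le_one {x y : ℝ} (hxy : x ≤ y) :
    √(1 / √y) * √√x ≤ 1 := by
  rw [← Real.sqrt_mul (by positivity), Real.sqrt_le_one, one_div_mul_eq_div]
  exact div_le_one_of_le₀ (Real.sqrt_le_sqrt hxy) (Real.sqrt_nonneg y)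

theorem abs_sqrt_mul_one_div_sqrt_sub_one_le {x y ε : ℝ} (hε : 0 ≤ ε) (hx : 0 < x)
    (hxy : x ≤ y) (hyx : y ≤ (1 + ε) ^ 2 * x) : |√y * (1 / √x) - 1| ≤ ε := by
  have hlower : 1 ≤ √(y / x) := Real.one_le_sqrt.2 ((one_le_div hx).2 hxy)
  have hupper : √(y / x) ≤ 1 + ε :=
    Real.sqrt_le_iff.2 ⟨by positivity, (div_le_iff₀ hx).2 hyx⟩
  rw [mul_one_div, ← Real.sqrt_div' y hx.le, abs_le]
  constructor <;> linarith

section SpecNorm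

variable {n : ℕ} {x y : Fin n → ℝ}

theorem specNorm_diagonal_sqrt_one_div_sqrt_mul_le_one (hxy : x ≤ y) :
    specNorm (diagonal (fun j => √(1 / √(y j))) * diagonal (fun j => √√(x j))) ≤ 1 := by
  rw [diagonal_mul_diagonal, specNorm_diagonal_le_iff zero_le_one]
  intro j
  rw [abs_of_nonneg (by positivity)]
  exact sqrt_one_div_sqrt_mul_sqrt_sqrt_le_one (hxy j)

theorem specNorm_diagonal_sqrt_mul_one_div_sqrt_sub_one_le {ε : ℝ} (hε : 0 ≤ ε)
    (hx : ∀ j, 0 < x j) (hxy : x ≤ y) (hyx : ∀ j, y j ≤ (1 + ε) ^ 2 * x j) :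
    specNorm (diagonal (fun j => √(y j)) * diagonal (fun j => 1 / √(x j)) - 1) ≤ ε := by
  rw [diagonal_mul_diagonal, ← diagonal_one, diagonal_sub, specNorm_diagonal_le_iff hε]
  exact fun j => abs_sqrt_mul_one_div_sqrt_sub_one_le hε (hx j) (hxy j) (hyx j)

end SpecNorm

theorem monotoneOn_of_isBetaSelection {ι : Type*} {K : ℕ} {a b u : ℕ → ι → ℝ} {β : ℕ → ℝ}
    (hu : ∀ k, 1 ≤ k → k ≤ K → ∀ j, u k j = β k * u (k - 1) j + (1 - β k) * a k j)
    (hβ : ∀ k, 1 ≤ k → k ≤ K → IsBetaSelection (u (k - 1)) (a k) (b k) (β k)) :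
    MonotoneOn u (Set.Iic K) := by
  refine monotoneOn_of_le_succ Set.ordConnected_Iic fun k _ _ hk j => ?_
  rw [Nat.succ_eq_succ] at hk ⊢
  rw [hu (k + 1) k.succ_pos hk j]
  exact (hβ (k + 1) k.succ_pos hk).le_update j

theorem stmt_3_general {d K : ℕ} {ε : ℝ} (hε : 0 ≤ ε) {a u : ℕ → Fin d → ℝ} {β : ℕ → ℝ}
    (hu0 : ∀ j, 0 < u 0 j)
    (hu : ∀ k, 1 ≤ k → k ≤ K → ∀ j, u k j = β k * u (k - 1) j + (1 - β k) * a k j)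
    (hβ : ∀ k, 1 ≤ k → k ≤ K →
      IsBetaSelection (u (k - 1)) (a k) (fun j => (1 + ε) ^ 2 * u (k - 1) j) (β k))
    (k : ℕ) (hk : 1 ≤ k) (hkK : k ≤ K) :
    specNorm (diagonal (fun j => √(1 / √(u k j))) * diagonal (fun j => √√(u (k - 1) j))) ≤ 1 ∧
    specNorm (diagonal (fun j => √(u k j)) * diagonal (fun j => 1 / √(u (k - 1) j)) - 1) ≤ ε ∧
    ∀ j, u (k - 1) j ≤ u k j ∧ u k j ≤ (1 + ε) ^ 2 * u (k - 1) j := by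
  have hmono : MonotoneOn u (Set.Iic K) := monotoneOn_of_isBetaSelection hu hβ
  have hk' : k - 1 ∈ Set.Iic K := (Nat.sub_le k 1).trans hkK
  have hpos (j : Fin d) : 0 < u (k - 1) j :=
    (hu0 j).trans_le (hmono (Nat.zero_le K) hk' (Nat.zero_le _) j)
  have hlower : u (k - 1) ≤ u k := hmono hk' hkK (Nat.sub_le k 1)
  have hupper (j : Fin d) : u k j ≤ (1 + ε) ^ 2 * u (k - 1) j := by
    have hceil : u (k - 1) j ≤ (1 + ε) ^ 2 * u (k - 1) j :=
      le_mul_of_one_le_left (hpos j).le (one_le_pow₀ (le_add_of_nonneg_right hε))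
    exact (hu k hk hkK j).trans_le ((hβ k hk hkK).update_le hceil)
  exact ⟨specNorm_diagonal_sqrt_one_div_sqrt_mul_le_one hlower,
    specNorm_diagonal_sqrt_mul_one_div_sqrt_sub_one_le hε hpos hlower hupper,
    fun j => ⟨hlower j, hupper j⟩⟩

/-- second part of Proposition 3.1 of the paper. With the β-Selection
rule, the diagonal matrices `D_k = diag(1/√u_{k,1}, …, 1/√u_{k,d})` satisfy
`‖D_k^{1/2} D_{k-1}^{-1/2}‖₂ ≤ 1` and `‖D_k⁻¹ D_{k-1} − I‖₂ ≤ ε` for `k = 1, …, K`;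
equivalently, `u_{k-1,j} ≤ u_{k,j} ≤ (1+ε)² u_{k-1,j}` for every `j`.
Here `D_k^{1/2} = diag(√(1/√u_{k,j}))` and `D_{k-1}^{-1/2} = diag(√(√u_{k-1,j}))`. -/
theorem stmt_3 {d K : ℕ} (lb ub ε : ℝ) (hlb : 0 < lb) (hlbub : lb ≤ ub) (hε : 0 < ε)
    (g u : ℕ → Fin d → ℝ) (β : ℕ → ℝ)
    (hu0 : ∀ j, u 0 j = 1 / ub ^ 2)
    (hu : ∀ k, 1 ≤ k → k ≤ K → ∀ j,
      u k j = β k * u (k - 1) j + (1 - β k) * (g k j) ^ 2)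
    (hβ1 : ∀ k, 1 ≤ k → k ≤ K →
      (∃ j, (g k j) ^ 2 ≤ u (k - 1) j) → β k = 1)
    (hβ2 : ∀ k, 1 ≤ k → k ≤ K →
      (¬ ∃ j, (g k j) ^ 2 ≤ u (k - 1) j) →
        β k ∈ Set.Icc
          (max (max
              (⨆ j, ((g k j) ^ 2 - 1 / lb ^ 2) / ((g k j) ^ 2 - u (k - 1) j))
              (⨆ j, ((g k j) ^ 2 - (1 + ε) ^ 2 * u (k - 1) j) / ((g k j) ^ 2 - u (k - 1) j)))
            0) 1) :
    ∀ k, 1 ≤ k → k ≤ K →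
      specNorm (Matrix.diagonal (fun j => Real.sqrt (1 / Real.sqrt (u k j))) *
          Matrix.diagonal (fun j => Real.sqrt (Real.sqrt (u (k - 1) j)))) ≤ 1 ∧
      specNorm (Matrix.diagonal (fun j => Real.sqrt (u k j)) *
          Matrix.diagonal (fun j => 1 / Real.sqrt (u (k - 1) j)) - 1) ≤ ε ∧
      ∀ j, u (k - 1) j ≤ u k j ∧ u k j ≤ (1 + ε) ^ 2 * u (k - 1) j := by
  have hub : 0 < ub := hlb.trans_le hlbub
  exact stmt_3_general (a := fun k j => g k j ^ 2) hε.le (fun j => by rw [hu0]; positivity) hu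
    fun k hk hkK => ⟨hβ1 k hk hkK, fun hex =>
      Set.Icc_subset_Icc_left (le_max_of_le_left (le_max_right _ _)) (hβ2 k hk hkK hex)⟩
end
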